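/- Let x, y ∈ Int I², x ≠ y, and let φₓ', φₓ'', φ_y : [0,1] → I² be continuous injective crosscuts from the open bottom edge to the open top edge, each mapping (0,1) into Int I², with φₓ'(1/2) = φₓ''(1/2) = x and φ_y(1/2) = y. Suppose φₓ'(I) ∩ φ_y(I) = ∅, y lies in the same connected component of I² \ φₓ'(I) as the right edge, and y lies in the same connected component of I² \ φₓ''(I) as the left edge. Then there exists a continuous map ψ : [0,1] → I² with ψ(I) ⊆ φₓ''(I) ∪ φ_y(I), ψ(0) in the open bottom edge, ψ(1) in the open top edge, and x, y ∉ ψ(I). -/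

import Mathlib

/-- The unit square `I² = [0,1] × [0,1]` in the plane. -/
def unitSq : Set (ℝ × ℝ) := Set.Icc (0, 0) (1, 1)

/-- The open bottom edge `(0,1) × {0}` of the unit square. -/
def botEdge : Set (ℝ × ℝ) := {p | p.1 ∈ Set.Ioo (0 : ℝ) 1 ∧ p.2 = 0}

/-- The open top edge `(0,1) × {1}` of the unit square. -/
def topEdge : Set (ℝ × ℝ) := {p | p.1 ∈ Set.Ioo (0 : ℝ) 1 ∧ p.2 = 1}

/-- The open left edge `{0} × (0,1)` of the unit square. -/
def leftEdge : Set (ℝ × ℝ) := {p | p.1 = 0 ∧ p.2 ∈ Set.Ioo (0 : ℝ) 1}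

/-- The open right edge `{1} × (0,1)` of the unit square. -/
def rightEdge : Set (ℝ × ℝ) := {p | p.1 = 1 ∧ p.2 ∈ Set.Ioo (0 : ℝ) 1}

/-- The full left edge `{0} × [0,1]` of the unit square. -/
def leftFull : Set (ℝ × ℝ) := {p | p.1 = 0 ∧ p.2 ∈ Set.Icc (0 : ℝ) 1}

/-- The full right edge `{1} × [0,1]` of the unit square. -/
def rightFull : Set (ℝ × ℝ) := {p | p.1 = 1 ∧ p.2 ∈ Set.Icc (0 : ℝ) 1}

/-- The midpoint parameter `1/2` of the unit interval. -/
noncomputable def half : unitInterval := ⟨1/2, by constructor <;> norm_num⟩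

/-- A bare crosscut of the square: a continuous injective path from the open bottom edge to
the open top edge, lying in the open square except for its endpoints. -/
def IsBareCrosscut (φ : unitInterval → ℝ × ℝ) : Prop :=
  Continuous φ ∧ Function.Injective φ ∧ φ 0 ∈ botEdge ∧ φ 1 ∈ topEdge ∧
    ∀ t : unitInterval, 0 < (t : ℝ) → (t : ℝ) < 1 → φ t ∈ interior unitSq

/-!
For a path `a` in the plane and a point `p` off it, let the side index of `a` at `p` be the
increment of a continuous logarithm of `a - p` along `a`, corrected by a boundary term that depends
only on `p` and the two ends of `a`. For a path crossing the square from bottom to top, it is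
locally constant in `p` away from the path, hence equal to `πi` on the component of the left edge
and to `-πi` on that of the right edge.

The index is antisymmetric: if `a s ≠ b t` whenever `s` and `t` lie in opposite halves of `[0, 1]`,
then the index of `a` at the midpoint of `b` is minus the index of `b` at the midpoint of `a`.
Indeed, `b t - a s` does not vanish for `(s, t)` in either of the two squares of opposite halves, so
its total increment around each of them is zero.

As `y` is on the right of `φₓ'`, the index of `φ_y` at `x` is `πi`. If opposite halves of `φₓ''` and
`φ_y` did not meet, it would also be `-πi`, because `y` is on the left of `φₓ''`. So they do meet,
and switching from one crosscut to the other at such a meeting point avoids both midpoints.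
-/

open Complex Set

theorem neg_I_mul_mem_slitPlane {z : ℂ} (hz : 0 ≤ z.im) (hz₀ : z ≠ 0) : -I * z ∈ slitPlane := by
  contrapose! hz₀
  have h : z.im ≤ 0 ∧ z.re = 0 := by simpa [mem_slitPlane_iff] using hz₀
  exact Complex.ext h.2 (le_antisymm h.1 hz)

theorem log_I_mul_of_re_pos {z : ℂ} (hz : 0 < z.re) : log (I * z) = log z + Real.pi / 2 * I := by
  have harg := abs_lt.1 (abs_arg_lt_pi_div_two_iff.2 (Or.inl hz))
  rw [log_mul I_ne_zero (slitPlane_ne_zero (Or.inl hz)), log_I, add_comm]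
  rw [arg_I]
  constructor <;> linarith [Real.pi_pos]

theorem log_neg_I_mul_of_re_pos {z : ℂ} (hz : 0 < z.re) :
    log (-I * z) = log z - Real.pi / 2 * I := by
  have harg := abs_lt.1 (abs_arg_lt_pi_div_two_iff.2 (Or.inl hz))
  rw [log_mul (neg_ne_zero.2 I_ne_zero) (slitPlane_ne_zero (Or.inl hz)), log_neg_I]
  · ring
  · rw [arg_neg_I]
    constructor <;> linarith [Real.pi_pos]

instance : ContractibleSpace unitInterval :=
  (convex_Icc (0 : ℝ) 1).contractibleSpace (nonempty_Icc.2 zero_le_one)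

instance : LocallyPathConnectedSpace unitInterval :=
  (convex_Icc (0 : ℝ) 1).locallyPathConnectedSpace

theorem exists_continuous_exp_eq {X : Type*} [TopologicalSpace X] [SimplyConnectedSpace X]
    [LocallyPathConnectedSpace X] {f : X → ℂ} (hf : Continuous f) (hf₀ : ∀ x, f x ≠ 0) :
    ∃ g : X → ℂ, Continuous g ∧ ∀ x, exp (g x) = f x := by
  obtain ⟨x₀⟩ := (inferInstance : Nonempty X)
  obtain ⟨g, ⟨-, hg⟩, -⟩ := isCoveringMapOn_exp.existsUnique_continuousMap_lifts
    (⟨f, hf⟩ : C(X, ℂ)) (exp_log (hf₀ x₀)) hf₀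
  exact ⟨g, g.continuous, fun x ↦ congrFun hg x⟩

theorem sub_eq_sub_of_exp_eq_exp {X : Type*} [TopologicalSpace X] [PreconnectedSpace X]
    {g h : X → ℂ} (hg : Continuous g) (hh : Continuous h) (hgh : ∀ x, exp (g x) = exp (h x))
    (x y : X) : g x - g y = h x - h y := by
  have key : g = fun z ↦ h z + (g y - h y) := by
    refine isCoveringMap_exp.eq_of_comp_eq hg (by fun_prop) (funext fun z ↦ Subtype.ext ?_) y
      (by ring)
    simp only [Function.comp_apply, exp_add, exp_sub, hgh, div_self (exp_ne_zero _), mul_one]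
  rw [congrFun key x]
  ring

open Classical in
/-- The increment `g 1 - g 0` of a continuous logarithm `g` of `f` on `[0, 1]`, which measures how
`f` winds around `0`; it is `0` by convention if `f` has no continuous logarithm. -/
noncomputable def logIncrement (f : unitInterval → ℂ) : ℂ :=
  if h : ∃ g : unitInterval → ℂ, Continuous g ∧ ∀ t, exp (g t) = f t then
    h.choose 1 - h.choose 0
  else 0

section logIncrement

variable {f g : unitInterval → ℂ}

theorem logIncrement_eq_sub (hg : Continuous g) (hgf : ∀ t, exp (g t) = f t) :
    logIncrement f = g 1 - g 0 := by
  have h : ∃ g : unitInterval → ℂ, Continuous g ∧ ∀ t, exp (g t) = f t := ⟨g, hg, hgf⟩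
  rw [logIncrement, dif_pos h]
  exact sub_eq_sub_of_exp_eq_exp h.choose_spec.1 hg (fun t ↦ by rw [h.choose_spec.2, hgf]) 1 0

theorem logIncrement_neg (hf : Continuous f) (hf₀ : ∀ t, f t ≠ 0) :
    logIncrement (fun t ↦ -f t) = logIncrement f := by
  obtain ⟨g, hg, hgf⟩ := exists_continuous_exp_eq hf hf₀
  rw [logIncrement_eq_sub hg hgf, logIncrement_eq_sub (g := fun t ↦ g t + Real.pi * I)
    (by fun_prop) fun t ↦ by rw [exp_add, exp_pi_mul_I, hgf, mul_neg_one]]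
  ring

theorem logIncrement_eq_inf_add_sup (hf : Continuous f) (hf₀ : ∀ t, f t ≠ 0) (m : unitInterval) :
    logIncrement f = logIncrement (fun t ↦ f (t ⊓ m)) + logIncrement (fun t ↦ f (t ⊔ m)) := by
  obtain ⟨g, hg, hgf⟩ := exists_continuous_exp_eq hf hf₀
  rw [logIncrement_eq_sub hg hgf,
    logIncrement_eq_sub (g := fun t ↦ g (t ⊓ m)) (by fun_prop) fun t ↦ hgf _,
    logIncrement_eq_sub (g := fun t ↦ g (t ⊔ m)) (by fun_prop) fun t ↦ hgf _,
    inf_of_le_right unitInterval.le_one', inf_of_le_left unitInterval.nonneg',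
    sup_of_le_left unitInterval.le_one', sup_of_le_right unitInterval.nonneg']
  ring

theorem logIncrement_bottom_add_right {F : unitInterval × unitInterval → ℂ} (hF : Continuous F)
    (hF₀ : ∀ z, F z ≠ 0) :
    logIncrement (fun s ↦ F (s, 0)) + logIncrement (fun t ↦ F (1, t)) =
      logIncrement (fun t ↦ F (0, t)) + logIncrement (fun s ↦ F (s, 1)) := by
  obtain ⟨G, hG, hGF⟩ := exists_continuous_exp_eq hF hF₀
  rw [logIncrement_eq_sub (g := fun s ↦ G (s, 0)) (by fun_prop) fun s ↦ hGF _,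
    logIncrement_eq_sub (g := fun t ↦ G (1, t)) (by fun_prop) fun t ↦ hGF _,
    logIncrement_eq_sub (g := fun t ↦ G (0, t)) (by fun_prop) fun t ↦ hGF _,
    logIncrement_eq_sub (g := fun s ↦ G (s, 1)) (by fun_prop) fun s ↦ hGF _]
  ring

theorem logIncrement_of_mul_mem_slitPlane (hf : Continuous f) {c : ℂ}
    (hc : ∀ t, c * f t ∈ slitPlane) : logIncrement f = log (c * f 1) - log (c * f 0) := by
  have hc₀ : c ≠ 0 := left_ne_zero_of_mul (slitPlane_ne_zero (hc 0))
  rw [logIncrement_eq_sub (g := fun t ↦ log (c * f t) - log c)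
    ((Continuous.clog (by fun_prop) hc).sub continuous_const) fun t ↦ by
      rw [exp_sub, exp_log (slitPlane_ne_zero (hc t)), exp_log hc₀, mul_div_cancel_left₀ _ hc₀]]
  ring

theorem logIncrement_of_im_nonneg (hf : Continuous f) (hf₀ : ∀ t, f t ≠ 0)
    (him : ∀ t, 0 ≤ (f t).im) : logIncrement f = log (-I * f 1) - log (-I * f 0) :=
  logIncrement_of_mul_mem_slitPlane hf fun t ↦ neg_I_mul_mem_slitPlane (him t) (hf₀ t)

end logIncrement

/-- The side index of a path `a` at a point `p` off `a`: it tells on which side of `a` the point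
lies, for `a` running from the bottom to the top of a horizontal strip containing `p`. The factor
`-I` makes `log` continuous on the closed upper half-plane without `0`, where `a 1 - p` and
`p - a 0` then lie. -/
noncomputable def sideIndex (a : unitInterval → ℂ) (p : ℂ) : ℂ :=
  logIncrement (fun t ↦ a t - p) - (log (-I * (a 1 - p)) - log (-I * (p - a 0)))

section sideIndex

variable {a b : unitInterval → ℂ}

theorem sideIndex_of_re_lt (ha : Continuous a) {p : ℂ} (hp : ∀ t, p.re < (a t).re) :
    sideIndex a p = Real.pi * I := by
  have hpos (t) : 0 < (a t - p).re := by simpa only [sub_re, sub_pos] using hp t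
  rw [sideIndex, logIncrement_of_mul_mem_slitPlane (c := 1) (by fun_prop)
      fun t ↦ Or.inl (by simpa only [one_mul] using hpos t),
    ← neg_sub (a 0) p, neg_mul_neg, log_neg_I_mul_of_re_pos (hpos 1),
    log_I_mul_of_re_pos (hpos 0), one_mul, one_mul]
  ring

theorem sideIndex_of_lt_re (ha : Continuous a) {p : ℂ} (hp : ∀ t, (a t).re < p.re) :
    sideIndex a p = -(Real.pi * I) := by
  have hpos (t) : 0 < (p - a t).re := by simpa only [sub_re, sub_pos] using hp t
  rw [sideIndex, logIncrement_of_mul_mem_slitPlane (c := -1) (by fun_prop)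
      fun t ↦ Or.inl (by simpa only [neg_one_mul, neg_sub] using hpos t),
    ← neg_sub p (a 1), neg_mul_neg I, log_I_mul_of_re_pos (hpos 1),
    log_neg_I_mul_of_re_pos (hpos 0), neg_one_mul, neg_one_mul, neg_neg, neg_sub]
  ring

theorem sideIndex_eq_of_joinedIn (ha : Continuous a) {p q : ℂ}
    (hpq : JoinedIn (im ⁻¹' Icc (a 0).im (a 1).im \ range a) p q) :
    sideIndex a p = sideIndex a q := by
  obtain ⟨γ, hγ⟩ := hpq
  have hne (s t) : a s - γ t ≠ 0 := sub_ne_zero.2 fun h ↦ (hγ t).2 ⟨s, h⟩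
  have hne' (t) : γ t - a 0 ≠ 0 := neg_sub (a 0) (γ t) ▸ neg_ne_zero.2 (hne 0 t)
  have square := logIncrement_bottom_add_right (F := fun z ↦ a z.1 - γ z.2) (by fun_prop)
    fun z ↦ hne z.1 z.2
  have top := logIncrement_of_im_nonneg (f := fun t ↦ a 1 - γ t) (by fun_prop) (hne 1)
    fun t ↦ by simpa only [sub_im, sub_nonneg] using (hγ t).1.2
  have bottom := logIncrement_of_im_nonneg (f := fun t ↦ γ t - a 0) (by fun_prop) hne'
    fun t ↦ by simpa only [sub_im, sub_nonneg] using (hγ t).1.1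
  rw [← logIncrement_neg (by fun_prop) hne'] at bottom
  simp only [neg_sub, γ.source, γ.target] at square top bottom
  rw [sideIndex, sideIndex]
  linear_combination square - top + bottom

theorem sideIndex_eq_of_isPreconnected (ha : Continuous a) {K : Set ℂ} (hK : IsPreconnected K)
    (hKa : K ⊆ im ⁻¹' Icc (a 0).im (a 1).im \ range a) {p q : ℂ} (hp : p ∈ K) (hq : q ∈ K) :
    sideIndex a p = sideIndex a q := by
  refine hK.induction₂ (fun p q ↦ sideIndex a p = sideIndex a q) (fun z hz ↦ ?_)
    (fun _ _ _ _ _ _ ↦ Eq.trans) (fun _ _ _ _ ↦ Eq.symm) hp hq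
  obtain ⟨ε, hε, hball⟩ := Metric.isOpen_iff.1 (isCompact_range ha).isClosed.isOpen_compl z
    (hKa hz).2
  filter_upwards [inter_mem_nhdsWithin K (Metric.ball_mem_nhds z hε)] with w hw
  have hconv : Convex ℝ (im ⁻¹' Icc (a 0).im (a 1).im ∩ Metric.ball z ε) :=
    ((convex_Icc _ _).linear_preimage imLm).inter (convex_ball z ε)
  have hseg := hconv.segment_subset ⟨(hKa hz).1, Metric.mem_ball_self hε⟩ ⟨(hKa hw.1).1, hw.2⟩
  exact sideIndex_eq_of_joinedIn ha
    (.of_segment_subset (hseg.trans (inter_subset_inter_right _ hball)))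

theorem logIncrement_inf_add_logIncrement_sup (ha : Continuous a) (hb : Continuous b)
    {m n : unitInterval} (hne : ∀ s ≤ m, ∀ t ≥ n, a s ≠ b t)
    (ha₀ : ∀ t ≥ n, (a 0).im ≤ (b t).im) (hb₁ : ∀ s ≤ m, (a s).im ≤ (b 1).im) :
    logIncrement (fun s ↦ a (s ⊓ m) - b n) + logIncrement (fun t ↦ b (t ⊔ n) - a m) =
      log (-I * (b 1 - a m)) - log (-I * (b n - a 0)) := by
  have hne' (s t) : b (t ⊔ n) - a (s ⊓ m) ≠ 0 :=
    sub_ne_zero.2 (hne _ inf_le_right _ le_sup_right).symm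
  have square := logIncrement_bottom_add_right (F := fun z ↦ b (z.2 ⊔ n) - a (z.1 ⊓ m))
    (by fun_prop) fun z ↦ hne' z.1 z.2
  have left := logIncrement_of_im_nonneg (f := fun t ↦ b (t ⊔ n) - a (0 ⊓ m)) (by fun_prop)
    (hne' 0) fun t ↦ by
      simpa only [sub_im, sub_nonneg, inf_of_le_left unitInterval.nonneg'] using
        ha₀ _ le_sup_right
  have top := logIncrement_of_im_nonneg (f := fun s ↦ b (1 ⊔ n) - a (s ⊓ m)) (by fun_prop)
    (hne' · 1) fun s ↦ by
      simpa only [sub_im, sub_nonneg, sup_of_le_left unitInterval.le_one'] using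
        hb₁ _ inf_le_right
  have bottom := logIncrement_neg (f := fun s ↦ b (0 ⊔ n) - a (s ⊓ m)) (by fun_prop) (hne' · 0)
  simp only [neg_sub, inf_of_le_left unitInterval.nonneg', inf_of_le_right unitInterval.le_one',
    sup_of_le_left unitInterval.le_one', sup_of_le_right unitInterval.nonneg']
    at square left top bottom
  linear_combination square + left + top + bottom

theorem sideIndex_eq_neg_sideIndex (ha : Continuous a) (hb : Continuous b)
    (hab : ∀ t, (b t).im ∈ Icc (a 0).im (a 1).im) (hba : ∀ s, (a s).im ∈ Icc (b 0).im (b 1).im)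
    {m n : unitInterval} (hlu : ∀ s ≤ m, ∀ t ≥ n, a s ≠ b t)
    (hul : ∀ s ≥ m, ∀ t ≤ n, a s ≠ b t) : sideIndex a (b n) = -sideIndex b (a m) := by
  have hbn (s) : a s - b n ≠ 0 := sub_ne_zero.2 <|
    (le_total s m).elim (hlu s · n le_rfl) (hul s · n le_rfl)
  have ham (t) : b t - a m ≠ 0 := sub_ne_zero.2 <|
    (le_total t n).elim (hul m le_rfl t · |>.symm) (hlu m le_rfl t · |>.symm)
  have lower_upper := logIncrement_inf_add_logIncrement_sup ha hb hlu (fun t _ ↦ (hab t).1)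
    fun s _ ↦ (hba s).2
  have upper_lower := logIncrement_inf_add_logIncrement_sup hb ha
    (fun t ht s hs ↦ (hul s hs t ht).symm) (fun s _ ↦ (hba s).1) fun t _ ↦ (hab t).2
  rw [sideIndex, sideIndex, logIncrement_eq_inf_add_sup (by fun_prop) hbn m,
    logIncrement_eq_inf_add_sup (by fun_prop) ham n]
  linear_combination lower_upper + upper_lower

end sideIndex

/-- A path in the square from the open bottom edge to the open top edge which misses the left and
right edges. Unlike a bare crosscut, it may have self-intersections and return to the bottom and top
edges. -/
structure IsCrossing (φ : unitInterval → ℝ × ℝ) : Prop where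
  continuous : Continuous φ
  zero_mem : φ 0 ∈ botEdge
  one_mem : φ 1 ∈ topEdge
  mem_prod : ∀ t, φ t ∈ Ioo (0 : ℝ) 1 ×ˢ Icc (0 : ℝ) 1

theorem unitSq_eq_prod : unitSq = Icc 0 1 ×ˢ Icc 0 1 := by
  rw [unitSq, Icc_prod_eq]

theorem interior_unitSq : interior unitSq = Ioo 0 1 ×ˢ Ioo 0 1 := by
  rw [unitSq_eq_prod, interior_prod_eq, interior_Icc]

theorem IsBareCrosscut.isCrossing {φ : unitInterval → ℝ × ℝ} (hφ : IsBareCrosscut φ) :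
    IsCrossing φ := by
  obtain ⟨hc, -, h0, h1, hint⟩ := hφ
  refine ⟨hc, h0, h1, fun t ↦ ?_⟩
  rcases eq_or_ne t 0 with rfl | ht0
  · exact ⟨h0.1, by simp [h0.2]⟩
  rcases eq_or_ne t 1 with rfl | ht1
  · exact ⟨h1.1, by simp [h1.2]⟩
  have h := hint t (unitInterval.pos_iff_ne_zero.2 ht0) (unitInterval.lt_one_iff_ne_one.2 ht1)
  rw [interior_unitSq] at h
  exact ⟨h.1, Ioo_subset_Icc_self h.2⟩

theorem joinedIn_of_path_apply_eq {X : Type*} [TopologicalSpace X] {a b c d : X}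
    {γ : Path a b} {δ : Path c d} {u v : unitInterval} (h : γ u = δ v) :
    JoinedIn (γ '' Icc 0 u ∪ δ '' Icc v 1) a d := by
  have hγ : JoinedIn (γ '' Icc 0 u) (γ 0) (γ u) :=
    ⟨γ.subpath 0 u, fun t ↦ γ.range_subpath_of_le 0 u unitInterval.nonneg' ▸ mem_range_self t⟩
  have hδ : JoinedIn (δ '' Icc v 1) (δ v) (δ 1) :=
    ⟨δ.subpath v 1, fun t ↦ δ.range_subpath_of_le v 1 unitInterval.le_one' ▸ mem_range_self t⟩
  rw [γ.source] at hγ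
  rw [δ.target] at hδ
  exact (hγ.mono subset_union_left).trans (h ▸ hδ.mono subset_union_right)

namespace IsCrossing

variable {φ ψ : unitInterval → ℝ × ℝ}

theorem continuous_equivRealProdCLM_symm_comp (hφ : IsCrossing φ) :
    Continuous (equivRealProdCLM.symm ∘ φ) :=
  equivRealProdCLM.symm.continuous.comp hφ.continuous

theorem sideIndex_eq_of_mem_connectedComponentIn (hφ : IsCrossing φ) {p q : ℝ × ℝ}
    (hp : p ∈ connectedComponentIn (unitSq \ range φ) q) :
    sideIndex (equivRealProdCLM.symm ∘ φ) (equivRealProdCLM.symm p) =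
      sideIndex (equivRealProdCLM.symm ∘ φ) (equivRealProdCLM.symm q) := by
  have hq := mem_connectedComponentIn (connectedComponentIn_nonempty_iff.1 ⟨p, hp⟩)
  refine sideIndex_eq_of_isPreconnected hφ.continuous_equivRealProdCLM_symm_comp
    (isPreconnected_connectedComponentIn.image _ equivRealProdCLM.symm.continuous.continuousOn) ?_
    (mem_image_of_mem _ hp) (mem_image_of_mem _ hq)
  rintro _ ⟨z, hz, rfl⟩
  obtain ⟨hzS, hzφ⟩ := connectedComponentIn_subset _ _ hz
  rw [unitSq_eq_prod] at hzS
  rw [range_comp]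
  exact ⟨by simpa [hφ.zero_mem.2, hφ.one_mem.2] using hzS.2,
    equivRealProdCLM.symm.injective.mem_set_image.not.2 hzφ⟩

theorem sideIndex_of_mem_leftFull (hφ : IsCrossing φ) {p q : ℝ × ℝ} (hp : p ∈ leftFull)
    (hpq : p ∈ connectedComponentIn (unitSq \ range φ) q) :
    sideIndex (equivRealProdCLM.symm ∘ φ) (equivRealProdCLM.symm q) = Real.pi * I := by
  rw [← hφ.sideIndex_eq_of_mem_connectedComponentIn hpq]
  exact sideIndex_of_re_lt hφ.continuous_equivRealProdCLM_symm_comp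
    fun t ↦ hp.1.trans_lt (hφ.mem_prod t).1.1

theorem sideIndex_of_mem_rightFull (hφ : IsCrossing φ) {p q : ℝ × ℝ} (hp : p ∈ rightFull)
    (hpq : p ∈ connectedComponentIn (unitSq \ range φ) q) :
    sideIndex (equivRealProdCLM.symm ∘ φ) (equivRealProdCLM.symm q) = -(Real.pi * I) := by
  rw [← hφ.sideIndex_eq_of_mem_connectedComponentIn hpq]
  exact sideIndex_of_lt_re hφ.continuous_equivRealProdCLM_symm_comp
    fun t ↦ (hφ.mem_prod t).1.2.trans_eq hp.1.symm

theorem sideIndex_apply_eq_neg_sideIndex_apply (hφ : IsCrossing φ) (hψ : IsCrossing ψ)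
    {m n : unitInterval} (hlu : ∀ s ≤ m, ∀ t ≥ n, φ s ≠ ψ t)
    (hul : ∀ s ≥ m, ∀ t ≤ n, φ s ≠ ψ t) :
    sideIndex (equivRealProdCLM.symm ∘ φ) (equivRealProdCLM.symm (ψ n)) =
      -sideIndex (equivRealProdCLM.symm ∘ ψ) (equivRealProdCLM.symm (φ m)) :=
  sideIndex_eq_neg_sideIndex hφ.continuous_equivRealProdCLM_symm_comp
    hψ.continuous_equivRealProdCLM_symm_comp
    (fun t ↦ by simpa [hφ.zero_mem.2, hφ.one_mem.2] using (hψ.mem_prod t).2)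
    (fun s ↦ by simpa [hψ.zero_mem.2, hψ.one_mem.2] using (hφ.mem_prod s).2)
    (fun s hs t ht ↦ equivRealProdCLM.symm.injective.ne (hlu s hs t ht))
    (fun s hs t ht ↦ equivRealProdCLM.symm.injective.ne (hul s hs t ht))

theorem exists_apply_eq_of_mem_rightFull_of_mem_leftFull {α β γ : unitInterval → ℝ × ℝ}
    (hα : IsCrossing α) (hβ : IsCrossing β) (hγ : IsCrossing γ) {m n : unitInterval}
    (hm : β m ∈ range α) (hαγ : Disjoint (range α) (range γ)) {p q : ℝ × ℝ}
    (hp : p ∈ rightFull) (hpα : p ∈ connectedComponentIn (unitSq \ range α) (γ n))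
    (hq : q ∈ leftFull) (hqβ : q ∈ connectedComponentIn (unitSq \ range β) (γ n)) :
    ∃ u v, β u = γ v ∧ (u ≤ m ∧ n ≤ v ∨ m ≤ u ∧ v ≤ n) := by
  by_contra! hne
  obtain ⟨k, hk⟩ := hm
  have hαγ' (s t) : α s ≠ γ t := hαγ.ne_of_mem (mem_range_self s) (mem_range_self t)
  have indexα := hα.sideIndex_apply_eq_neg_sideIndex_apply hγ (m := k) (n := n)
    (fun s _ t _ ↦ hαγ' s t) fun s _ t _ ↦ hαγ' s t
  have indexβ := hβ.sideIndex_apply_eq_neg_sideIndex_apply hγ (m := m) (n := n)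
    (fun s hs t ht h ↦ ((hne s t h).1 hs).not_ge ht) fun s hs t ht h ↦ ((hne s t h).2 hs).not_ge ht
  rw [hα.sideIndex_of_mem_rightFull hp hpα, hk] at indexα
  rw [hβ.sideIndex_of_mem_leftFull hq hqβ, ← indexα, self_eq_neg] at indexβ
  simp [Real.pi_ne_zero] at indexβ

theorem exists_path_of_apply_eq (hφ : IsCrossing φ) (hψ : IsCrossing ψ) {m n u v : unitInterval}
    (huv : φ u = ψ v) (hu : u ≤ m) (hv : n ≤ v) (hm : ∀ s, φ s = φ m → s = m)
    (hn : ∀ t, ψ t = ψ n → t = n) (hmψ : φ m ∉ range ψ) (hnφ : ψ n ∉ range φ) :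
    ∃ χ : unitInterval → ℝ × ℝ, Continuous χ ∧
      range χ ⊆ (range φ ∪ range ψ) \ {φ m, ψ n} ∧ χ 0 ∈ botEdge ∧ χ 1 ∈ topEdge := by
  have hum : u < m := hu.lt_of_ne fun h ↦ hmψ ⟨v, by rw [← huv, h]⟩
  have hnv : n < v := hv.lt_of_ne fun h ↦ hnφ ⟨u, by rw [huv, h]⟩
  obtain ⟨χ, hχ⟩ := joinedIn_of_path_apply_eq (γ := ⟨⟨φ, hφ.continuous⟩, rfl, rfl⟩)
    (δ := ⟨⟨ψ, hψ.continuous⟩, rfl, rfl⟩) huv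
  refine ⟨χ, χ.continuous, range_subset_iff.2 fun r ↦ ?_, χ.source.symm ▸ hφ.zero_mem,
    χ.target.symm ▸ hψ.one_mem⟩
  rcases hχ r with ⟨s, hs, hsr⟩ | ⟨t, ht, htr⟩
  · rw [← hsr]
    refine ⟨Or.inl ⟨s, rfl⟩, ?_⟩
    rintro (h | h)
    exacts [(hs.2.trans_lt hum).ne (hm s h), hnφ ⟨s, h⟩]
  · rw [← htr]
    refine ⟨Or.inr ⟨t, rfl⟩, ?_⟩
    rintro (h | h)
    exacts [hmψ ⟨t, h⟩, (hnv.trans_le ht.1).ne' (hn t h)]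

end IsCrossing

theorem exists_path_avoiding_general {x y : ℝ × ℝ} {α β γ : unitInterval → ℝ × ℝ}
    (hα : IsCrossing α) (hβ : IsCrossing β) (hγ : IsCrossing γ) (hxα : x ∈ range α)
    (hxβ : ∃! s, β s = x) (hyγ : ∃! t, γ t = y) (hαγ : Disjoint (range α) (range γ))
    (hright : ∃ p ∈ rightFull, p ∈ connectedComponentIn (unitSq \ range α) y)
    (hleft : ∃ p ∈ leftFull, p ∈ connectedComponentIn (unitSq \ range β) y) :
    ∃ ψ : unitInterval → ℝ × ℝ, Continuous ψ ∧ range ψ ⊆ range β ∪ range γ ∧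
      ψ 0 ∈ botEdge ∧ ψ 1 ∈ topEdge ∧ x ∉ range ψ ∧ y ∉ range ψ := by
  obtain ⟨m, rfl, hm⟩ := hxβ
  obtain ⟨n, rfl, hn⟩ := hyγ
  obtain ⟨p, hp, hpα⟩ := hright
  obtain ⟨q, hq, hqβ⟩ := hleft
  have hxγ : β m ∉ range γ := hαγ.notMem_of_mem_left hxα
  have hyβ : γ n ∉ range β := (connectedComponentIn_nonempty_iff.1 ⟨q, hqβ⟩).2
  obtain ⟨ψ, hψ, hψr, h0, h1⟩ : ∃ ψ : unitInterval → ℝ × ℝ, Continuous ψ ∧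
      range ψ ⊆ (range β ∪ range γ) \ {β m, γ n} ∧ ψ 0 ∈ botEdge ∧ ψ 1 ∈ topEdge := by
    obtain ⟨u, v, huv, ⟨hu, hv⟩ | ⟨hu, hv⟩⟩ :=
      hα.exists_apply_eq_of_mem_rightFull_of_mem_leftFull hβ hγ hxα hαγ hp hpα hq hqβ
    · exact hβ.exists_path_of_apply_eq hγ huv hu hv hm hn hxγ hyβ
    · rw [union_comm, pair_comm]
      exact hγ.exists_path_of_apply_eq hβ huv.symm hv hu hn hm hyβ hxγ
  exact ⟨ψ, hψ, hψr.trans sdiff_subset, h0, h1, fun h ↦ (hψr h).2 (Or.inl rfl),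
    fun h ↦ (hψr h).2 (Or.inr rfl)⟩

/-- Given two crosscuts `φₓ'`, `φₓ''` through `x` and a crosscut `φ_y` through `y`,
disjoint from `φₓ'`, with `y` on the right of `φₓ'` and on the left of `φₓ''`, there is
a path in `φₓ''(I) ∪ φ_y(I)` from the bottom edge to the top edge avoiding both `x` and
`y`. -/
theorem exists_path_avoiding (x y : ℝ × ℝ) (hx : x ∈ interior unitSq)
    (hy : y ∈ interior unitSq) (hxy : x ≠ y)
    (φx' φx'' φy : unitInterval → ℝ × ℝ)
    (hφx' : IsBareCrosscut φx') (hφx'' : IsBareCrosscut φx'') (hφy : IsBareCrosscut φy)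
    (hmidx' : φx' half = x) (hmidx'' : φx'' half = x) (hmidy : φy half = y)
    (hdisj : Set.range φx' ∩ Set.range φy = ∅)
    (hynotx'' : y ∉ Set.range φx'')
    (hright : ∀ p ∈ rightFull, p ∈ connectedComponentIn (unitSq \ Set.range φx') y)
    (hleft : ∀ p ∈ leftFull, p ∈ connectedComponentIn (unitSq \ Set.range φx'') y) :
    ∃ ψ : unitInterval → ℝ × ℝ, Continuous ψ ∧
      Set.range ψ ⊆ Set.range φx'' ∪ Set.range φy ∧
      ψ 0 ∈ botEdge ∧ ψ 1 ∈ topEdge ∧ x ∉ Set.range ψ ∧ y ∉ Set.range ψ :=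
  exists_path_avoiding_general hφx'.isCrossing hφx''.isCrossing hφy.isCrossing
    ⟨half, hmidx'⟩ ⟨half, hmidx'', fun s hs ↦ hφx''.2.1 (hs.trans hmidx''.symm)⟩
    ⟨half, hmidy, fun t ht ↦ hφy.2.1 (ht.trans hmidy.symm)⟩ (disjoint_iff_inter_eq_empty.2 hdisj)
    ⟨(1, 0), by simp [rightFull], hright _ (by simp [rightFull])⟩
    ⟨(0, 0), by simp [leftFull], hleft _ (by simp [leftFull])⟩
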